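/- The ten-point QM mass-matrix integration rule is exact whenever the metric is a quadratic polynomial: for every polynomial g in three variables of total degree at most 2 and all i, j ∈ {1,…,15}, ∫_W φ^i φ^j g dV = Σ_{k=1}^{10} (∫_W φ^i φ^j φ_QM^k dV) · g(p_k), where the integrals are with respect to Lebesgue measure on W. -/

import Mathlib

open MeasureTheory MvPolynomial

/-- The fifteen shape functions of the 15-node wedge element, in natural
coordinates `x = (ξ, η, ζ)` with `ξ = x 0`, `η = x 1`, `ζ = x 2`. -/
noncomputable def wedgeShape : Fin 15 → (Fin 3 → ℝ) → ℝ :=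
  ![fun x => -((1 - x 0 - x 1) * (1 - x 2) * (2 * x 0 + 2 * x 1 + x 2)) / 2,
    fun x => x 0 * (1 - x 2) * (2 * x 0 - x 2 - 2) / 2,
    fun x => x 1 * (1 - x 2) * (2 * x 1 - x 2 - 2) / 2,
    fun x => -((1 - x 0 - x 1) * (1 + x 2) * (2 * x 0 + 2 * x 1 - x 2)) / 2,
    fun x => x 0 * (1 + x 2) * (2 * x 0 + x 2 - 2) / 2,
    fun x => x 1 * (1 + x 2) * (2 * x 1 + x 2 - 2) / 2,
    fun x => 2 * x 0 * (1 - x 0 - x 1) * (1 - x 2),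
    fun x => 2 * x 0 * x 1 * (1 - x 2),
    fun x => 2 * x 1 * (1 - x 0 - x 1) * (1 - x 2),
    fun x => 2 * x 0 * (1 - x 0 - x 1) * (1 + x 2),
    fun x => 2 * x 0 * x 1 * (1 + x 2),
    fun x => 2 * x 1 * (1 - x 0 - x 1) * (1 + x 2),
    fun x => (1 - x 0 - x 1) * (1 - x 2 ^ 2),
    fun x => x 0 * (1 - x 2 ^ 2),
    fun x => x 1 * (1 - x 2 ^ 2)]

/-- Natural coordinates of the fifteen nodes of the wedge element. -/
noncomputable def wedgeNode : Fin 15 → Fin 3 → ℝ :=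
  ![![0, 0, -1], ![1, 0, -1], ![0, 1, -1],
    ![0, 0, 1], ![1, 0, 1], ![0, 1, 1],
    ![1/2, 0, -1], ![1/2, 1/2, -1], ![0, 1/2, -1],
    ![1/2, 0, 1], ![1/2, 1/2, 1], ![0, 1/2, 1],
    ![0, 0, 0], ![1, 0, 0], ![0, 1, 0]]

/-- Reference domain of the fifteen-node wedge element. -/
def wedgeDomain : Set (Fin 3 → ℝ) :=
  {x | 0 ≤ x 0 ∧ 0 ≤ x 1 ∧ x 0 + x 1 ≤ 1 ∧ -1 ≤ x 2 ∧ x 2 ≤ 1}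

/-- Linear-metric (LM) interpolation functions. -/
noncomputable def phiLM : Fin 4 → (Fin 3 → ℝ) → ℝ :=
  ![fun x => 83/12 - 10 * x 0 - 10 * x 1 - 10 * x 2,
    fun x => -37/12 + 10 * x 0,
    fun x => -37/12 + 10 * x 1,
    fun x => 1/4 + 10 * x 2]

/-- The four LM evaluation points. -/
noncomputable def ptLM : Fin 4 → Fin 3 → ℝ :=
  ![![37/120, 37/120, -1/40], ![49/120, 37/120, -1/40],
    ![37/120, 49/120, -1/40], ![37/120, 37/120, 3/40]]

/-- Quadratic-metric (QM) interpolation functions. -/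
noncomputable def phiQM : Fin 10 → (Fin 3 → ℝ) → ℝ :=
  ![fun x => 6391/72 - (800/3) * x 0 - (800/3) * x 1 - (800/3) * x 2
      + 400 * x 0 * x 1 + 400 * x 0 * x 2 + 400 * x 1 * x 2
      + 200 * x 0 ^ 2 + 200 * x 1 ^ 2 + 200 * x 2 ^ 2,
    fun x => 1591/72 - (400/3) * x 0 + 200 * x 0 ^ 2,
    fun x => 1591/72 - (400/3) * x 1 + 200 * x 1 ^ 2,
    fun x => -1/8 + 200 * x 2 ^ 2,
    fun x => -3071/36 + 400 * x 0 + (370/3) * x 1 + (370/3) * x 2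
      - 400 * x 0 * x 1 - 400 * x 0 * x 2 - 400 * x 0 ^ 2,
    fun x => 1369/36 - (370/3) * x 0 - (370/3) * x 1 + 400 * x 0 * x 1,
    fun x => -3071/36 + (370/3) * x 0 + 400 * x 1 + (370/3) * x 2
      - 400 * x 0 * x 1 - 400 * x 1 * x 2 - 400 * x 1 ^ 2,
    fun x => 83/12 - 10 * x 0 - 10 * x 1 + (800/3) * x 2
      - 400 * x 0 * x 2 - 400 * x 1 * x 2 - 400 * x 2 ^ 2,
    fun x => -37/12 + 10 * x 0 - (370/3) * x 2 + 400 * x 0 * x 2,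
    fun x => -37/12 + 10 * x 1 - (370/3) * x 2 + 400 * x 1 * x 2]

/-- The ten QM evaluation points. -/
noncomputable def ptQM : Fin 10 → Fin 3 → ℝ :=
  ![![37/120, 37/120, -1/40], ![49/120, 37/120, -1/40],
    ![37/120, 49/120, -1/40], ![37/120, 37/120, 3/40],
    ![43/120, 37/120, -1/40], ![43/120, 43/120, -1/40],
    ![37/120, 43/120, -1/40], ![37/120, 37/120, 1/40],
    ![43/120, 37/120, 1/40], ![37/120, 43/120, 1/40]]

/-- The isoparametric map of the wedge element with nodal positions `X`. -/
noncomputable def wedgeMap (X : Fin 15 → Fin 3 → ℝ) (u : Fin 3 → ℝ) : Fin 3 → ℝ :=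
  fun m => ∑ i : Fin 15, wedgeShape i u * X i m

/-- The Jacobian matrix `J_mn = ∂X_m/∂u_n` of the isoparametric map. -/
noncomputable def wedgeJac (X : Fin 15 → Fin 3 → ℝ) (u : Fin 3 → ℝ) :
    Matrix (Fin 3) (Fin 3) ℝ :=
  Matrix.of fun m n => fderiv ℝ (fun v => wedgeMap X v m) u (Pi.single n 1)

/-- The metric (Jacobian determinant) of the isoparametric map. -/
noncomputable def wedgeMetric (X : Fin 15 → Fin 3 → ℝ) (u : Fin 3 → ℝ) : ℝ :=
  (wedgeJac X u).det

/-! The `phiQM k` are the Lagrange basis of the polynomials of degree at most two for the points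
`ptQM k`, so such a polynomial `g` satisfies `g = ∑ k, g (ptQM k) • phiQM k` identically; both sides
being linear in `g`, it is enough to check `1`, the coordinates and their pairwise products. The
rule is this identity integrated against a weight; of the weight and the measure it uses only that
the integrals converge. -/

section PolynomialReproduction

variable {σ ι R : Type*} [CommSemiring R] [Fintype ι] {c : ι → R} {p : ι → σ → R} {x : σ → R}

lemma eval_monomial_eq_mul_prod_map_toMultiset (y : σ → R) (d : σ →₀ ℕ) (a : R) :
    eval y (monomial d a) = a * ((Finsupp.toMultiset d).map y).prod := by
  classical
  rw [eval_monomial, Finsupp.toMultiset_map, Finsupp.prod_toMultiset,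
    Finsupp.prod_mapDomain_index pow_zero pow_add]

lemma sum_mul_eval_eq_eval_of_forall_multiset {n : ℕ}
    (h : ∀ s : Multiset σ, s.card ≤ n → ∑ k, c k * (s.map (p k)).prod = (s.map x).prod)
    {g : MvPolynomial σ R} (hg : g.totalDegree ≤ n) :
    ∑ k, c k * eval (p k) g = eval x g := by
  have eval_eq_sum (y : σ → R) :
      eval y g = ∑ d ∈ g.support, coeff d g * ((Finsupp.toMultiset d).map y).prod := by
    conv_lhs => rw [g.as_sum]
    simp only [map_sum, eval_monomial_eq_mul_prod_map_toMultiset]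
  have card_le {d : σ →₀ ℕ} (hd : d ∈ g.support) : (Finsupp.toMultiset d).card ≤ n :=
    (Finsupp.card_toMultiset d).trans_le ((le_totalDegree hd).trans hg)
  simp only [eval_eq_sum, Finset.mul_sum]
  rw [Finset.sum_comm]
  refine Finset.sum_congr rfl fun d hd => ?_
  rw [← h _ (card_le hd), Finset.mul_sum]
  exact Finset.sum_congr rfl fun k _ => mul_left_comm _ _ _

theorem sum_mul_eval_eq_eval_of_totalDegree_le_two (h_one : ∑ k, c k = 1)
    (h_coord : ∀ m, ∑ k, c k * p k m = x m)
    (h_prod : ∀ m n, ∑ k, c k * (p k m * p k n) = x m * x n)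
    {g : MvPolynomial σ R} (hg : g.totalDegree ≤ 2) :
    ∑ k, c k * eval (p k) g = eval x g := by
  refine sum_mul_eval_eq_eval_of_forall_multiset (fun s hs => ?_) hg
  obtain h0 | h1 | h2 : s.card = 0 ∨ s.card = 1 ∨ s.card = 2 := by lia
  · obtain rfl := Multiset.card_eq_zero.mp h0
    simpa using h_one
  · obtain ⟨m, rfl⟩ := Multiset.card_eq_one.mp h1
    simpa using h_coord m
  · obtain ⟨m, n, rfl⟩ := Multiset.card_eq_two.mp h2
    simpa using h_prod m n

end PolynomialReproduction

section QuadraticMetricInterpolation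

variable (x : Fin 3 → ℝ)

lemma sum_phiQM : ∑ k, phiQM k x = 1 := by
  simp only [Fin.sum_univ_ofNat, phiQM, Matrix.cons_val]
  ring

lemma sum_phiQM_mul_ptQM (m : Fin 3) : ∑ k, phiQM k x * ptQM k m = x m := by
  fin_cases m <;> simp only [Fin.sum_univ_ofNat, phiQM, ptQM, Matrix.cons_val,
    Fin.zero_eta, Fin.mk_one, Fin.reduceFinMk] <;> ring

lemma sum_phiQM_mul_ptQM_mul_ptQM (m n : Fin 3) :
    ∑ k, phiQM k x * (ptQM k m * ptQM k n) = x m * x n := by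
  fin_cases m <;> fin_cases n <;> simp only [Fin.sum_univ_ofNat, phiQM, ptQM, Matrix.cons_val,
    Fin.zero_eta, Fin.mk_one, Fin.reduceFinMk] <;> ring

theorem sum_phiQM_mul_eval_ptQM {g : MvPolynomial (Fin 3) ℝ} (hg : g.totalDegree ≤ 2) :
    ∑ k, phiQM k x * eval (ptQM k) g = eval x g :=
  sum_mul_eval_eq_eval_of_totalDegree_le_two (sum_phiQM x) (sum_phiQM_mul_ptQM x)
    (sum_phiQM_mul_ptQM_mul_ptQM x) hg

end QuadraticMetricInterpolation

lemma integral_mul_sum_mul_const {α ι 𝕜 : Type*} [MeasurableSpace α] [Fintype ι] [RCLike 𝕜]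
    {μ : Measure α} {w : α → 𝕜} {φ : ι → α → 𝕜}
    (hwφ : ∀ k, Integrable (fun a => w a * φ k a) μ) (c : ι → 𝕜) :
    ∫ a, w a * ∑ k, φ k a * c k ∂μ = ∑ k, (∫ a, w a * φ k a ∂μ) * c k := by
  simp only [Finset.mul_sum, ← mul_assoc, ← integral_mul_const]
  exact integral_finsetSum _ fun k _ => (hwφ k).mul_const (c k)

theorem QM_rule_exact_for_quadratic_metric_general {μ : Measure (Fin 3 → ℝ)}
    {w : (Fin 3 → ℝ) → ℝ} (hw : ∀ k, Integrable (fun x => w x * phiQM k x) μ)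
    {g : MvPolynomial (Fin 3) ℝ} (hg : g.totalDegree ≤ 2) :
    ∫ x, w x * eval x g ∂μ = ∑ k, (∫ x, w x * phiQM k x ∂μ) * eval (ptQM k) g := by
  simp only [← integral_mul_sum_mul_const hw, sum_phiQM_mul_eval_ptQM _ hg]

lemma continuous_wedgeShape (i : Fin 15) : Continuous (wedgeShape i) := by
  unfold wedgeShape
  fin_cases i <;> dsimp <;> fun_prop

lemma continuous_phiQM (k : Fin 10) : Continuous (phiQM k) := by
  unfold phiQM
  fin_cases k <;> dsimp <;> fun_prop

lemma isClosed_wedgeDomain : IsClosed wedgeDomain := by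
  refine .and (isClosed_le ?_ ?_) <| .and (isClosed_le ?_ ?_) <|
    .and (isClosed_le ?_ ?_) <| .and (isClosed_le ?_ ?_) (isClosed_le ?_ ?_) <;>
  fun_prop

lemma wedgeDomain_subset_Icc : wedgeDomain ⊆ Set.Icc (-1) 1 := by
  rintro x ⟨h0, h1, h01, h2, h2'⟩
  constructor <;> intro m <;> fin_cases m <;> dsimp <;> linarith

lemma isCompact_wedgeDomain : IsCompact wedgeDomain :=
  isCompact_Icc.of_isClosed_subset isClosed_wedgeDomain wedgeDomain_subset_Icc

lemma integrableOn_wedgeShape_mul_wedgeShape_mul_phiQM (i j : Fin 15) (k : Fin 10) :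
    IntegrableOn (fun x => wedgeShape i x * wedgeShape j x * phiQM k x) wedgeDomain :=
  (((continuous_wedgeShape i).mul (continuous_wedgeShape j)).mul
    (continuous_phiQM k)).continuousOn.integrableOn_compact isCompact_wedgeDomain

/-- the ten-point QM mass-matrix rule is exact for quadratic metrics. -/
theorem QM_rule_exact_for_quadratic_metric (g : MvPolynomial (Fin 3) ℝ)
    (hg : g.totalDegree ≤ 2) (i j : Fin 15) :
    ∫ x in wedgeDomain, wedgeShape i x * wedgeShape j x * MvPolynomial.eval x g =
      ∑ k : Fin 10,
        (∫ x in wedgeDomain, wedgeShape i x * wedgeShape j x * phiQM k x) *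
          MvPolynomial.eval (ptQM k) g :=
  QM_rule_exact_for_quadratic_metric_general
    (integrableOn_wedgeShape_mul_wedgeShape_mul_phiQM i j) hg
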